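/- arXiv:1505.07529 — 8 statements merged into one kernel-verified Lean document; each statement's English description precedes it below -/
import Mathlib

section
/- For every x ∈ ℝ, the new 6-point kernel satisfies the zeroth moment condition: ∑_{j∈ℤ} φ(x − j) = 1. -/
noncomputable section

namespace IB6

/-- The special second-moment constant `K = 59/60 − √29/20`. -/
def K : ℝ := 59 / 60 - Real.sqrt 29 / 20

/-- `α = 28`. -/
def a : ℝ := 28

/-- `β(r)`. -/
def b (r : ℝ) : ℝ :=
  9 / 4 - (3 / 2) * (K + r ^ 2) * r + (22 / 3 - 7 * K) * r - (7 / 3) * r ^ 3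

/-- `γ(r)`. -/
def c (r : ℝ) : ℝ :=
  -(11 / 32) * r ^ 2 + (3 / 32) * (2 * K + r ^ 2) * r ^ 2
    + (1 / 72) * ((3 * K - 1) * r + r ^ 3) ^ 2
    + (1 / 18) * ((4 - 3 * K) * r - r ^ 3) ^ 2

/-- `p₋₃(r) = (−β(r) + √(β(r)² − 4αγ(r)))/(2α)`. -/
def pm3 (r : ℝ) : ℝ := (-b r + Real.sqrt (b r ^ 2 - 4 * a * c r)) / (2 * a)

/-- `p₋₂(r)`. -/
def pm2 (r : ℝ) : ℝ :=
  -3 * pm3 r - 1 / 16 + (K + r ^ 2) / 8 + (3 * K - 1) * r / 12 + r ^ 3 / 12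

/-- `p₋₁(r)`. -/
def pm1 (r : ℝ) : ℝ := 2 * pm3 r + 1 / 4 + (4 - 3 * K) * r / 6 - r ^ 3 / 6

/-- `p₀(r)`. -/
def p0 (r : ℝ) : ℝ := 2 * pm3 r + 5 / 8 - (K + r ^ 2) / 4

/-- `p₁(r)`. -/
def p1 (r : ℝ) : ℝ := -3 * pm3 r + 1 / 4 - (4 - 3 * K) * r / 6 + r ^ 3 / 6

/-- `p₂(r)`. -/
def p2 (r : ℝ) : ℝ :=
  pm3 r - 1 / 16 + (K + r ^ 2) / 8 - (3 * K - 1) * r / 12 - r ^ 3 / 12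

/-- The new 6-point immersed-boundary kernel `φ`. -/
def phi (x : ℝ) : ℝ :=
  if -3 ≤ x ∧ x < -2 then pm3 (x - (-3))
  else if -2 ≤ x ∧ x < -1 then pm2 (x - (-2))
  else if -1 ≤ x ∧ x < 0 then pm1 (x - (-1))
  else if 0 ≤ x ∧ x < 1 then p0 (x - 0)
  else if 1 ≤ x ∧ x < 2 then p1 (x - 1)
  else if 2 ≤ x ∧ x < 3 then p2 (x - 2)
  else 0

/-! The six values of `φ` on a coset `r + ℤ` with `0 ≤ r < 1` are `p₋₃(r), …, p₂(r)`. Each is an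
integer multiple of `p₋₃(r)` plus a cubic polynomial in `r`. The multiples `1, -3, 2, 2, -3, 1` add
up to zero and the polynomials add up to one, so the value of the square root is immaterial. -/

section IntegerTranslates

variable {R M : Type*} [Ring R] [LinearOrder R] [FloorRing R]
  [AddCommMonoid M] [TopologicalSpace M]

lemma hasSum_comp_sub_intCast_iff {f : R → M} {x : R} {s : M} :
    HasSum (fun j : ℤ => f (x - j)) s ↔ HasSum (fun k : ℤ => f (Int.fract x + k)) s := by
  rw [← (Equiv.subLeft ⌊x⌋).hasSum_iff]
  refine iff_of_eq (congrArg (HasSum · s) (funext fun k => congrArg f ?_))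
  simp only [Equiv.subLeft_apply, Int.cast_sub, Int.fract]
  abel

lemma hasSum_comp_sub_intCast_of_support_subset_Ico [IsStrictOrderedRing R]
    {f : R → M} {m n : ℤ} (hf : Function.support f ⊆ Set.Ico (m : R) n) (x : R) :
    HasSum (fun j : ℤ => f (x - j)) (∑ k ∈ Finset.Ico m n, f (Int.fract x + k)) := by
  rw [hasSum_comp_sub_intCast_iff]
  refine hasSum_sum_of_ne_finset_zero fun k hk => ?_
  contrapose! hk
  have mem_Ico := hf hk
  rwa [Set.mem_Ico, ← Int.le_floor, ← Int.floor_lt, Int.floor_add_intCast, Int.floor_fract,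
    zero_add, ← Finset.mem_Ico] at mem_Ico

end IntegerTranslates

lemma support_phi_subset : Function.support phi ⊆ Set.Ico (-3) 3 := by
  rw [Function.support_subset_iff']
  intro x hx
  grind [phi]

section Branches

variable {r : ℝ}

lemma phi_sub_three (hr : r ∈ Set.Ico 0 1) : phi (r - 3) = pm3 r := by
  grind [phi]

lemma phi_sub_two (hr : r ∈ Set.Ico 0 1) : phi (r - 2) = pm2 r := by
  grind [phi]

lemma phi_sub_one (hr : r ∈ Set.Ico 0 1) : phi (r - 1) = pm1 r := by
  grind [phi]

lemma phi_of_mem_Ico (hr : r ∈ Set.Ico 0 1) : phi r = p0 r := by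
  grind [phi]

lemma phi_add_one (hr : r ∈ Set.Ico 0 1) : phi (r + 1) = p1 r := by
  grind [phi]

lemma phi_add_two (hr : r ∈ Set.Ico 0 1) : phi (r + 2) = p2 r := by
  grind [phi]

lemma sum_branches_eq_one (r : ℝ) : pm3 r + pm2 r + pm1 r + p0 r + p1 r + p2 r = 1 := by
  unfold pm2 pm1 p0 p1 p2
  ring

lemma sum_phi_add_intCast (hr : r ∈ Set.Ico 0 1) :
    ∑ k ∈ Finset.Ico (-3 : ℤ) 3, phi (r + k) = 1 := by
  have Ico_eq : Finset.Ico (-3 : ℤ) 3 = {-3, -2, -1, 0, 1, 2} := by decide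
  calc ∑ k ∈ Finset.Ico (-3 : ℤ) 3, phi (r + k)
      = phi (r - 3) + phi (r - 2) + phi (r - 1) + phi r + phi (r + 1) + phi (r + 2) := by
        simp [Ico_eq, sub_eq_add_neg, add_assoc]
    _ = pm3 r + pm2 r + pm1 r + p0 r + p1 r + p2 r := by
        rw [phi_sub_three hr, phi_sub_two hr, phi_sub_one hr, phi_of_mem_Ico hr, phi_add_one hr,
          phi_add_two hr]
    _ = 1 := sum_branches_eq_one r

end Branches

/-- Zeroth moment condition: `∑_{j∈ℤ} φ(x − j) = 1` for all `x`. -/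
theorem new6pt_zeroth_moment (x : ℝ) : ∑' j : ℤ, phi (x - j) = 1 := by
  have support_subset : Function.support phi ⊆ Set.Ico ((-3 : ℤ) : ℝ) (3 : ℤ) := by
    exact_mod_cast support_phi_subset
  have fract_mem : Int.fract x ∈ Set.Ico (0 : ℝ) 1 := ⟨Int.fract_nonneg x, Int.fract_lt_one x⟩
  calc ∑' j : ℤ, phi (x - j)
      = ∑ k ∈ Finset.Ico (-3 : ℤ) 3, phi (Int.fract x + k) :=
        (hasSum_comp_sub_intCast_of_support_subset_Ico support_subset x).tsum_eq
    _ = 1 := sum_phi_add_intCast fract_mem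

end IB6
end
end

section
/- The new 6-point kernel φ is continuous on all of ℝ; in particular the piecewise formulas match at the integer breakpoints: p_k(1) = p_{k+1}(0) for k ∈ {−3, −2, −1, 0, 1}, p₋₃(0) = 0, and p₂(1) = 0. -/
noncomputable section

namespace IB6

/-!
`φ` is glued from continuous pieces on the intervals `[k, k + 1]`, so it is continuous as soon as
consecutive pieces agree at the integers. Every piece is a constant multiple of `p₋₃` plus a
polynomial, so this matching only involves `p₋₃ 0` and `p₋₃ 1`. Since `p₋₃ r` is the larger root of
`α y² + β(r) y + γ(r)`, both values follow by exhibiting a root not to the left of the vertex: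
`0` at `r = 0`, where `γ` vanishes, and `(2 K - 1) / 16` at `r = 1`, which lies to the right of the
vertex because `K ≤ 1`.
-/

open Set Filter

section Gluing

variable {α β : Type*} [Ring α] [LinearOrder α] [IsStrictOrderedRing α] [FloorRing α]

lemma floor_fract_eqOn_Icc {q : ℤ → α → β} (hmatch : ∀ k, q k 1 = q (k + 1) 0) (k : ℤ) :
    EqOn (fun x => q ⌊x⌋ (Int.fract x)) (fun x => q k (x - k)) (Icc k (k + 1)) := by
  rintro x ⟨hkx, hxk⟩
  rcases hxk.lt_or_eq with hlt | rfl
  · have hfloor : ⌊x⌋ = k := Int.floor_eq_iff.2 ⟨hkx, hlt⟩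
    simp only [Int.fract, hfloor]
  · simp [hmatch]

variable [TopologicalSpace α] [OrderTopology α] [TopologicalSpace β]

lemma locallyFinite_Icc_intCast : LocallyFinite fun k : ℤ => Icc (k : α) (k + 1) :=
  locallyFinite_Icc_of_tendsto
    (tendsto_atTop_atTop.2 fun y => ⟨⌈y⌉, fun _ => Int.ceil_le.1⟩)
    (tendsto_atBot_atBot.2 fun y => ⟨⌊y⌋ - 1, fun k hk => by
      exact_mod_cast Int.le_floor.1 (Int.le_sub_one_iff.1 hk)⟩)

lemma continuous_floor_fract {q : ℤ → α → β} (hq : ∀ k, ContinuousOn (q k) (Icc 0 1))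
    (hmatch : ∀ k, q k 1 = q (k + 1) 0) : Continuous fun x => q ⌊x⌋ (Int.fract x) := by
  have hcover : ⋃ k : ℤ, Icc (k : α) (k + 1) = univ := iUnion_eq_univ_iff.2 fun x =>
    ⟨⌊x⌋, Int.floor_le x, (Int.lt_floor_add_one x).le⟩
  refine locallyFinite_Icc_intCast.continuous hcover (fun _ => isClosed_Icc) fun k => ?_
  have hshift : MapsTo (fun x : α => x - k) (Icc k (k + 1)) (Icc 0 1) := fun x hx =>
    ⟨sub_nonneg.2 hx.1, sub_le_iff_le_add'.2 hx.2⟩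
  exact ((hq k).comp (by fun_prop) hshift).congr (floor_fract_eqOn_Icc hmatch k)

end Gluing

lemma quadratic_formula_eq_of_root {A B C y : ℝ} (hA : A ≠ 0) (hroot : A * (y * y) + B * y + C = 0)
    (hvertex : 0 ≤ 2 * A * y + B) : (-B + √(B ^ 2 - 4 * A * C)) / (2 * A) = y := by
  have hsqrt : √(B ^ 2 - 4 * A * C) = 2 * A * y + B := by
    rw [← discrim, discrim_eq_sq_of_quadratic_eq_zero hroot, Real.sqrt_sq hvertex]
  rw [hsqrt]
  field_simp
  ring

lemma K_le_one : K ≤ 1 := by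
  have := Real.sqrt_nonneg 29
  unfold K
  linarith

lemma pm3_eq_of_root {r y : ℝ} (hroot : a * (y * y) + b r * y + c r = 0)
    (hvertex : 0 ≤ 2 * a * y + b r) : pm3 r = y :=
  quadratic_formula_eq_of_root (by norm_num [a]) hroot hvertex

lemma pm3_zero : pm3 0 = 0 :=
  pm3_eq_of_root (by simp [c]) (by norm_num [b])

lemma pm3_one : pm3 1 = (2 * K - 1) / 16 := by
  apply pm3_eq_of_root
  · unfold a b c
    ring
  · unfold a b
    linarith [K_le_one]

lemma pm3_one_eq_pm2_zero : pm3 1 = pm2 0 := by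
  rw [pm2, pm3_zero, pm3_one]; ring

lemma pm2_one_eq_pm1_zero : pm2 1 = pm1 0 := by
  rw [pm2, pm1, pm3_zero, pm3_one]; ring

lemma pm1_one_eq_p0_zero : pm1 1 = p0 0 := by
  rw [pm1, p0, pm3_zero, pm3_one]; ring

lemma p0_one_eq_p1_zero : p0 1 = p1 0 := by
  rw [p0, p1, pm3_zero, pm3_one]; ring

lemma p1_one_eq_p2_zero : p1 1 = p2 0 := by
  rw [p1, p2, pm3_zero, pm3_one]; ring

lemma p2_one : p2 1 = 0 := by
  rw [p2, pm3_one]; ring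

/-- The piece `p_k` of the kernel on `[k, k + 1)`, as a function of the offset `r = x - k`,
extended by `0` to every integer `k` outside `{-3, …, 2}`. -/
def piece : ℤ → ℝ → ℝ
  | -3 => pm3
  | -2 => pm2
  | -1 => pm1
  | 0 => p0
  | 1 => p1
  | 2 => p2
  | _ => 0

lemma piece_eq_zero {k : ℤ} (hk : k < -3 ∨ 3 ≤ k) : piece k = 0 := by
  unfold piece
  split <;> first | rfl | omega

lemma piece_one_eq_piece_add_one_zero (k : ℤ) : piece k 1 = piece (k + 1) 0 := by
  by_cases hout : k < -4 ∨ 3 ≤ k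
  · rw [piece_eq_zero (k := k) (by omega), piece_eq_zero (k := k + 1) (by omega)]
    rfl
  · obtain ⟨hlower, hupper⟩ : -4 ≤ k ∧ k < 3 := by omega
    interval_cases k
    · exact pm3_zero.symm
    · exact pm3_one_eq_pm2_zero
    · exact pm2_one_eq_pm1_zero
    · exact pm1_one_eq_p0_zero
    · exact p0_one_eq_p1_zero
    · exact p1_one_eq_p2_zero
    · exact p2_one

-- `Real.sqrt` is `0` on negative numbers, hence continuous on all of `ℝ`.
lemma continuous_pm3 : Continuous pm3 := by
  unfold pm3 b c
  fun_prop

lemma continuous_piece (k : ℤ) : Continuous (piece k) := by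
  have := continuous_pm3
  unfold piece pm2 pm1 p0 p1 p2
  split <;> fun_prop

lemma phi_eq_piece_floor_fract (x : ℝ) : phi x = piece ⌊x⌋ (Int.fract x) := by
  have piece_eq (k : ℤ) (hx : (k : ℝ) ≤ x ∧ x < k + 1) :
      piece k (x - k) = piece ⌊x⌋ (Int.fract x) := by
    rw [Int.fract, Int.floor_eq_iff.2 hx]
  unfold phi
  split_ifs with hm3 hm2 hm1 h0 h1 h2
  · simpa [piece] using piece_eq (-3) (by norm_num [hm3])
  · simpa [piece] using piece_eq (-2) (by norm_num [hm2])
  · simpa [piece] using piece_eq (-1) (by norm_num [hm1])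
  · simpa [piece] using piece_eq 0 (by norm_num [h0])
  · simpa [piece] using piece_eq 1 (by norm_num [h1])
  · simpa [piece] using piece_eq 2 (by norm_num [h2])
  · have hout : x < -3 ∨ 3 ≤ x := by grind
    have hfloor : ⌊x⌋ < -3 ∨ 3 ≤ ⌊x⌋ := by
      rw [Int.floor_lt, Int.le_floor]
      exact_mod_cast hout
    rw [piece_eq_zero hfloor, Pi.zero_apply]

lemma continuous_phi : Continuous phi := by
  rw [funext phi_eq_piece_floor_fract]
  exact continuous_floor_fract (fun k => (continuous_piece k).continuousOn)
    piece_one_eq_piece_add_one_zero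

/-- The new 6-point kernel is continuous on all of `ℝ`; in particular the piecewise
formulas match at the integer breakpoints. -/
theorem new6pt_continuous :
    Continuous phi ∧
    pm3 1 = pm2 0 ∧ pm2 1 = pm1 0 ∧ pm1 1 = p0 0 ∧ p0 1 = p1 0 ∧ p1 1 = p2 0 ∧
    pm3 0 = 0 ∧ p2 1 = 0 :=
  ⟨continuous_phi, pm3_one_eq_pm2_zero, pm2_one_eq_pm1_zero, pm1_one_eq_p0_zero,
    p0_one_eq_p1_zero, p1_one_eq_p2_zero, pm3_zero, p2_one⟩

end IB6
end
end

section
/- The discriminant appearing in the definition of the new 6-point kernel is non-negative: for every r ∈ [0,1], β(r)² − 4·α·γ(r) ≥ 0, where α = 28; hence the quadratic equation α·z² + β(r)·z + γ(r) = 0 has a real root and p₋₃(r) is a genuine (real) root of it. -/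
noncomputable section

namespace IB6

/-!
The constant `K` is a root of the quadratic polynomial that multiplies `r ^ 2` in `c r`, so `c r` is
`r ^ 4` times a function of the form `A * r ^ 2 - B` and is nonpositive up to `r ^ 2 = 23 / 20`.
There the discriminant `b r ^ 2 - 4 * a * c r` is a sum of two nonnegative terms, and this range
contains `[0, 1]`. For larger `|r|` the cubic term of `b r` dominates, and `b r ^ 2` outweighs
`4 * a * c r`, so the discriminant is nonnegative for every real `r`.
-/

theorem K_quadratic_eq_zero : 180 * K ^ 2 - 354 * K + 161 = 0 := by
  have sq_sqrt_29 : Real.sqrt 29 ^ 2 = 29 := Real.sq_sqrt (by norm_num)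
  unfold K
  linear_combination (9 / 20) * sq_sqrt_29

theorem le_K : 7 / 10 ≤ K := by
  have sqrt_29_le : Real.sqrt 29 ≤ 17 / 3 := Real.sqrt_le_iff.mpr (by norm_num)
  unfold K
  linarith

theorem K_le : K ≤ 43 / 60 := by
  have le_sqrt_29 : 16 / 3 ≤ Real.sqrt 29 := Real.le_sqrt_of_sq_le (by norm_num)
  unfold K
  linarith

theorem c_eq_pow_four_mul (r : ℝ) : c r = r ^ 4 / 288 * (20 * r ^ 2 - (109 - 120 * K)) := by
  unfold c
  linear_combination r ^ 2 / 288 * K_quadratic_eq_zero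

theorem c_le (r : ℝ) : c r ≤ 5 / 72 * r ^ 4 * (r ^ 2 - 23 / 20) := by
  calc
    c r = r ^ 4 / 288 * (20 * r ^ 2 - (109 - 120 * K)) := c_eq_pow_four_mul r
    _ ≤ r ^ 4 / 288 * (20 * r ^ 2 - 23) := by
      gcongr
      linarith [K_le]
    _ = 5 / 72 * r ^ 4 * (r ^ 2 - 23 / 20) := by ring

theorem c_nonpos_of_sq_le {r : ℝ} (hr : r ^ 2 ≤ 23 / 20) : c r ≤ 0 :=
  (c_le r).trans <| mul_nonpos_of_nonneg_of_nonpos (by positivity) (sub_nonpos.mpr hr)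

theorem b_eq_cubic (r : ℝ) : b r = 9 / 4 - r * (23 / 6 * r ^ 2 - (22 / 3 - 17 / 2 * K)) := by
  unfold b
  ring

theorem le_abs_b (r : ℝ) : |r| * (23 / 6 * r ^ 2 - 83 / 60) - 9 / 4 ≤ |b r| := by
  have coeff_le : 23 / 6 * r ^ 2 - 83 / 60 ≤ 23 / 6 * r ^ 2 - (22 / 3 - 17 / 2 * K) := by
    linarith [le_K]
  calc
    |r| * (23 / 6 * r ^ 2 - 83 / 60) - 9 / 4
        ≤ |r| * |23 / 6 * r ^ 2 - (22 / 3 - 17 / 2 * K)| - |9 / 4| := by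
      rw [abs_of_pos (by norm_num : (0 : ℝ) < 9 / 4)]
      gcongr
      exact coeff_le.trans (le_abs_self _)
    _ = |r * (23 / 6 * r ^ 2 - (22 / 3 - 17 / 2 * K))| - |9 / 4| := by rw [abs_mul]
    _ ≤ |b r| := by
      rw [b_eq_cubic, abs_sub_comm (9 / 4 : ℝ)]
      exact abs_sub_abs_le_abs_sub _ _

-- `7 / 2` and `9 / 10` are small and large enough, respectively, for the bound to hold from
-- `r ^ 2 = 23 / 20` on, while its square still exceeds `4 * a` times the bound of `c_le`.
theorem le_abs_b_of_le_sq {r : ℝ} (hr : 23 / 20 ≤ r ^ 2) :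
    7 / 2 * |r| * (r ^ 2 - 9 / 10) ≤ |b r| := by
  have le_abs_r : 107 / 100 ≤ |r| := by
    rw [← Real.sqrt_sq_eq_abs]
    exact Real.le_sqrt_of_sq_le (by linarith)
  have const_le : 9 / 4 ≤ |r| * (1 / 3 * r ^ 2 + 53 / 30) := by nlinarith
  linarith [le_abs_b r]

theorem four_mul_a_mul_c_le_b_sq_of_le_sq {r : ℝ} (hr : 23 / 20 ≤ r ^ 2) :
    4 * a * c r ≤ b r ^ 2 := by
  -- The difference of the two sides is a quadratic in `r ^ 2` with negative discriminant
  -- and vertex near `22 / 15`.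
  have quadratic_le : 70 / 9 * r ^ 2 * (r ^ 2 - 23 / 20) ≤ 49 / 4 * (r ^ 2 - 9 / 10) ^ 2 := by
    nlinarith [sq_nonneg (r ^ 2 - 22 / 15)]
  calc
    4 * a * c r ≤ 4 * a * (5 / 72 * r ^ 4 * (r ^ 2 - 23 / 20)) := by
      gcongr
      · norm_num [a]
      · exact c_le r
    _ = r ^ 2 * (70 / 9 * r ^ 2 * (r ^ 2 - 23 / 20)) := by
      unfold a
      ring
    _ ≤ r ^ 2 * (49 / 4 * (r ^ 2 - 9 / 10) ^ 2) := by gcongr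
    _ = (7 / 2 * |r| * (r ^ 2 - 9 / 10)) ^ 2 := by
      rw [mul_pow, mul_pow, sq_abs]
      ring
    _ ≤ |b r| ^ 2 := by
      have : 0 ≤ r ^ 2 - 9 / 10 := by linarith
      gcongr
      exact le_abs_b_of_le_sq hr
    _ = b r ^ 2 := sq_abs _

theorem discrim_nonneg (r : ℝ) : 0 ≤ discrim a (b r) (c r) := by
  rw [discrim, sub_nonneg]
  rcases le_total (r ^ 2) (23 / 20) with small | large
  · calc
      4 * a * c r ≤ 0 := mul_nonpos_of_nonneg_of_nonpos (by norm_num [a]) (c_nonpos_of_sq_le small)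
      _ ≤ b r ^ 2 := sq_nonneg _
  · exact four_mul_a_mul_c_le_b_sq_of_le_sq large

theorem quadratic_pm3_eq_zero (r : ℝ) : a * pm3 r ^ 2 + b r * pm3 r + c r = 0 := by
  have a_ne_zero : a ≠ 0 := by norm_num [a]
  have discrim_eq := (Real.mul_self_sqrt (discrim_nonneg r)).symm
  rw [sq]
  exact (quadratic_eq_zero_iff a_ne_zero discrim_eq _).mpr (Or.inl rfl)

theorem new6pt_discriminant_nonneg_general (r : ℝ) :
    0 ≤ b r ^ 2 - 4 * a * c r ∧ a * (pm3 r) ^ 2 + b r * pm3 r + c r = 0 :=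
  ⟨discrim_nonneg r, quadratic_pm3_eq_zero r⟩

/-- For every `r ∈ [0,1]` the discriminant `β(r)² − 4αγ(r)` is non-negative; hence
the quadratic `α z² + β(r) z + γ(r) = 0` has a real root, and `p₋₃(r)` is such a root. -/
theorem new6pt_discriminant_nonneg (r : ℝ) (hr : r ∈ Set.Icc (0 : ℝ) 1) :
    0 ≤ b r ^ 2 - 4 * a * c r ∧ a * (pm3 r) ^ 2 + b r * pm3 r + c r = 0 :=
  new6pt_discriminant_nonneg_general r

end IB6
end
end

section
/- Exact grid translational invariance is inconsistent with compact support: if φ : ℝ → ℝ is continuous with compact support and there exists a function Φ : ℝ → ℝ such that ∑_{j∈ℤ} φ(r₁ − j)·φ(r₂ − j) = Φ(r₁ − r₂) for all r₁, r₂ ∈ ℝ, then φ is identically zero. -/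
/-!
Let `x` be within `1/2` of the lower end of the support of `φ` and `y` within `1/2` of the upper end
of the support of `ψ`. In the coupling sum at `(x, y)` every term with `j ≠ 0` moves `x` below the
support of `φ` or `y` above that of `ψ`, so the sum is `φ x * ψ y`. Shifting both points down by
`1/2` keeps their difference but removes the term `j = 0` as well, while the term `j = -1` is still
absent. Invariance thus forces `φ x * ψ y = 0`.
-/

section AlmostExtremal

variable {G : Type*} [AddCommGroup G] [LinearOrder G] [IsOrderedAddMonoid G] [Archimedean G]
  {s : Set G} {ε : G}

theorem exists_mem_forall_mem_sub_lt (hs : s.Nonempty) (hbdd : BddBelow s) (hε : 0 < ε) :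
    ∃ x ∈ s, ∀ z ∈ s, x - ε < z := by
  classical
  obtain ⟨b, hb⟩ := hbdd
  have exists_step : ∃ n : ℕ, ∃ x ∈ s, x ≤ b + n • ε := by
    obtain ⟨x, hx⟩ := hs
    obtain ⟨n, hn⟩ := Archimedean.arch (x - b) hε
    exact ⟨n, x, hx, sub_le_iff_le_add'.mp hn⟩
  obtain ⟨x, hx, hx_le⟩ := Nat.find_spec exists_step
  refine ⟨x, hx, fun z hz => ?_⟩
  cases hn : Nat.find exists_step with
  | zero =>
    have hxb : x ≤ b := by simpa [hn] using hx_le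
    exact (sub_lt_self x hε).trans_le (hxb.trans (hb hz))
  | succ n =>
    have not_step : ¬∃ x ∈ s, x ≤ b + n • ε := Nat.find_min exists_step (by lia)
    calc x - ε ≤ b + n • ε := by
          rwa [hn, succ_nsmul, ← add_assoc, ← sub_le_iff_le_add] at hx_le
      _ < z := not_le.mp fun hz_le => not_step ⟨z, hz, hz_le⟩

theorem exists_mem_forall_mem_lt_add (hs : s.Nonempty) (hbdd : BddAbove s) (hε : 0 < ε) :
    ∃ y ∈ s, ∀ z ∈ s, z < y + ε := by
  obtain ⟨y, hy, hlt⟩ := exists_mem_forall_mem_sub_lt hs.neg hbdd.neg hε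
  refine ⟨-y, hy, fun z hz => ?_⟩
  have : y - ε < -z := hlt (-z) (Set.neg_mem_neg.mpr hz)
  rwa [lt_neg, neg_sub, sub_eq_neg_add] at this

end AlmostExtremal

/-- The coupling of `φ`, evaluated at `r₁`, with `ψ`, evaluated at `r₂`, through the unit grid `ℤ`.
It is a `tsum`, hence meaningful only where the terms are summable; this holds as soon as the
support of `φ` is bounded below and that of `ψ` is bounded above, the sum then being finite. -/
noncomputable def gridCoupling {K R : Type*} [Ring K] [NonUnitalNonAssocSemiring R]
    [TopologicalSpace R] (φ ψ : K → R) (r₁ r₂ : K) : R :=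
  ∑' j : ℤ, φ (r₁ - j) * ψ (r₂ - j)

section GridCoupling

variable {K : Type*} [Ring K] [PartialOrder K] [IsOrderedRing K] {x y : K}

theorem apply_sub_intCast_eq_zero_of_pos {M : Type*} [Zero M] {f : K → M}
    (hf : ∀ z ≤ x - 1, f z = 0) {j : ℤ} (hj : 0 < j) : f (x - j) = 0 := by
  have one_le : (1 : K) ≤ j := by simpa using Int.cast_mono (R := K) (Int.add_one_le_of_lt hj)
  exact hf _ (sub_le_sub_left one_le x)

theorem apply_sub_intCast_eq_zero_of_neg {M : Type*} [Zero M] {f : K → M}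
    (hf : ∀ z ≥ x + 1, f z = 0) {j : ℤ} (hj : j < 0) : f (x - j) = 0 := by
  have le_neg_one : (j : K) ≤ -1 := by
    simpa using Int.cast_mono (R := K) (Int.le_sub_one_of_lt hj)
  exact hf _ (by simpa using sub_le_sub_left le_neg_one x)

variable {R : Type*} [NonUnitalNonAssocSemiring R] [TopologicalSpace R] {φ ψ : K → R}

theorem gridCoupling_eq_mul (hφ : ∀ z ≤ x - 1, φ z = 0) (hψ : ∀ z ≥ y + 1, ψ z = 0) :
    gridCoupling φ ψ x y = φ x * ψ y := by
  have term_eq_zero (j : ℤ) (hj : j ≠ 0) : φ (x - j) * ψ (y - j) = 0 := by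
    rcases hj.lt_or_gt with hneg | hpos
    · rw [apply_sub_intCast_eq_zero_of_neg hψ hneg, mul_zero]
    · rw [apply_sub_intCast_eq_zero_of_pos hφ hpos, zero_mul]
  simpa [gridCoupling] using tsum_eq_single 0 term_eq_zero

theorem gridCoupling_eq_zero (hφ : ∀ z ≤ x, φ z = 0) (hψ : ∀ z ≥ y + 1, ψ z = 0) :
    gridCoupling φ ψ x y = 0 := by
  have hφ' : ∀ z ≤ x - 1, φ z = 0 := fun z hz => hφ z (hz.trans (sub_le_self x zero_le_one))
  rw [gridCoupling_eq_mul hφ' hψ, hφ x le_rfl, zero_mul]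

end GridCoupling

theorem exact_translation_invariance_impossible_general {K R : Type*}
    [Field K] [LinearOrder K] [IsStrictOrderedRing K] [Archimedean K]
    [NonUnitalNonAssocSemiring R] [NoZeroDivisors R] [TopologicalSpace R]
    {φ ψ : K → R} (hφ : BddBelow (Function.support φ)) (hψ : BddAbove (Function.support ψ))
    {Φ : K → R} (hinv : ∀ r₁ r₂, gridCoupling φ ψ r₁ r₂ = Φ (r₁ - r₂)) :
    φ = 0 ∨ ψ = 0 := by
  by_contra! ⟨hφ_ne, hψ_ne⟩
  have half_pos : (0 : K) < 1 / 2 := one_half_pos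
  obtain ⟨x, hx, hx_lt⟩ :=
    exists_mem_forall_mem_sub_lt (Function.support_nonempty_iff.mpr hφ_ne) hφ half_pos
  obtain ⟨y, hy, hlt_y⟩ :=
    exists_mem_forall_mem_lt_add (Function.support_nonempty_iff.mpr hψ_ne) hψ half_pos
  have hφ_zero (z : K) (hz : z ≤ x - 1 / 2) : φ z = 0 :=
    Function.notMem_support.mp fun h => (hx_lt z h).not_ge hz
  have hψ_zero (z : K) (hz : y + 1 / 2 ≤ z) : ψ z = 0 :=
    Function.notMem_support.mp fun h => (hlt_y z h).not_ge hz
  refine mul_ne_zero hx hy ?_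
  calc φ x * ψ y = gridCoupling φ ψ x y :=
        (gridCoupling_eq_mul (fun z hz => hφ_zero z (by linarith))
          fun z hz => hψ_zero z (by linarith)).symm
    _ = gridCoupling φ ψ (x - 1 / 2) (y - 1 / 2) := by
        rw [hinv, hinv, sub_sub_sub_cancel_right]
    _ = 0 := gridCoupling_eq_zero hφ_zero fun z hz => hψ_zero z (by linarith)

/-- Exact grid translational invariance is inconsistent with compact support: if `φ` is
continuous with compact support and the coupling sum `∑_{j∈ℤ} φ(r₁ − j)·φ(r₂ − j)`
depends only on `r₁ − r₂`, then `φ` is identically zero. -/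
theorem exact_translation_invariance_impossible
    (φ : ℝ → ℝ) (hcont : Continuous φ) (hsupp : HasCompactSupport φ)
    (Φ : ℝ → ℝ)
    (hinv : ∀ r₁ r₂ : ℝ, ∑' j : ℤ, φ (r₁ - j) * φ (r₂ - j) = Φ (r₁ - r₂)) :
    ∀ x : ℝ, φ x = 0 :=
  congrFun <| or_self_iff.mp <| exact_translation_invariance_impossible_general
    (hsupp.isCompact.bddBelow.mono (subset_tsupport φ))
    (hsupp.isCompact.bddAbove.mono (subset_tsupport φ)) hinv
end

section
/- A compactly supported, bounded kernel satisfying the zeroth and first moment conditions interpolates smooth functions with second-order accuracy: there exists a constant C₀ (depending only on φ and its support radius r_s) such that for every twice continuously differentiable f : ℝ → ℝ with |f''(y)| ≤ M for all y, every meshwidth h > 0, and every x ∈ ℝ, one has |∑_{j∈ℤ} φ(x/h − j)·f(j·h) − f(x)| ≤ C₀·M·h². -/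
/-!
Put `r = x / h` and expand `f` to first order at `x`. The zeroth moment condition reproduces the
value `f x`, and the first moment condition annihilates the linear term, so the interpolation error
is the weighted sum of the Taylor remainders at the nodes `j * h`. Each remainder is at most
`M / 2 * h ^ 2 * (r - j) ^ 2`, hence the error is at most `M / 2 * h ^ 2` times the second absolute
moment `∑ j, |φ (r - j)| * (r - j) ^ 2`. For a bounded kernel of compact support that moment is
bounded uniformly in `r`, because at most `2 * rs + 1` integers lie within distance `rs` of `r`.
-/

open scoped NNReal

section Taylor

variable {V E : Type*} [NormedAddCommGroup V] [NormedSpace ℝ V] [NormedAddCommGroup E]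
  [NormedSpace ℝ E] {f : V → E} {M : ℝ≥0}

theorem norm_sub_sub_fderiv_apply_le_of_lipschitzWith_fderiv (hf : Differentiable ℝ f)
    (hf' : LipschitzWith M (fderiv ℝ f)) (x y : V) :
    ‖f y - f x - fderiv ℝ f x (y - x)‖ ≤ M / 2 * ‖y - x‖ ^ 2 := by
  set v := y - x with hv
  let remainder (s : ℝ) : E := f (x + s • v) - f x - s • fderiv ℝ f x v
  have hasDerivAt_remainder (s : ℝ) :
      HasDerivAt remainder ((fderiv ℝ f (x + s • v) - fderiv ℝ f x) v) s := by
    have hline : HasDerivAt (fun s : ℝ ↦ x + s • v) v s := by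
      simpa using ((hasDerivAt_id s).smul_const v).const_add x
    have hcurve := (hf (x + s • v)).hasFDerivAt.comp_hasDerivAt s hline
    have hlinear := (hasDerivAt_id s).smul_const (fderiv ℝ f x v)
    exact ((hcurve.sub_const (f x)).sub hlinear).congr_deriv (by simp)
  have hasDerivAt_bound (s : ℝ) :
      HasDerivAt (fun s : ℝ ↦ M / 2 * ‖v‖ ^ 2 * s ^ 2) (M * ‖v‖ ^ 2 * s) s :=
    ((hasDerivAt_pow 2 s).const_mul _).congr_deriv (by ring)
  have norm_deriv_le (s : ℝ) (hs : s ∈ Set.Ico (0 : ℝ) 1) :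
      ‖(fderiv ℝ f (x + s • v) - fderiv ℝ f x) v‖ ≤ M * ‖v‖ ^ 2 * s :=
    calc
      _ ≤ ‖fderiv ℝ f (x + s • v) - fderiv ℝ f x‖ * ‖v‖ := ContinuousLinearMap.le_opNorm _ _
      _ ≤ M * ‖x + s • v - x‖ * ‖v‖ := by gcongr; exact hf'.norm_sub_le _ _
      _ = M * ‖v‖ ^ 2 * s := by
        rw [add_sub_cancel_left, norm_smul, Real.norm_of_nonneg hs.1]
        ring
  have norm_remainder_le := image_norm_le_of_norm_deriv_right_le_deriv_boundary
    (fun s _ ↦ (hasDerivAt_remainder s).continuousAt.continuousWithinAt)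
    (fun s _ ↦ (hasDerivAt_remainder s).hasDerivWithinAt) (by simp [remainder])
    hasDerivAt_bound norm_deriv_le (Set.right_mem_Icc.2 zero_le_one)
  simpa [remainder, hv] using norm_remainder_le

theorem summable_and_norm_tsum_smul_sub_le_of_moments [CompleteSpace E] {ι : Type*} {w : ι → ℝ}
    {t : ι → V} {x : V} (hw₀ : HasSum w 1) (hw₁ : HasSum (fun i ↦ w i • (t i - x)) 0)
    (hw₂ : Summable fun i ↦ |w i| * ‖t i - x‖ ^ 2) (hf : Differentiable ℝ f)
    (hf' : LipschitzWith M (fderiv ℝ f)) :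
    (Summable fun i ↦ w i • f (t i)) ∧
      ‖∑' i, w i • f (t i) - f x‖ ≤ M / 2 * ∑' i, |w i| * ‖t i - x‖ ^ 2 := by
  let remainder (i : ι) : E := w i • (f (t i) - f x - fderiv ℝ f x (t i - x))
  have norm_remainder_le (i : ι) : ‖remainder i‖ ≤ M / 2 * (|w i| * ‖t i - x‖ ^ 2) := by
    rw [norm_smul, Real.norm_eq_abs, mul_left_comm]
    gcongr
    exact norm_sub_sub_fderiv_apply_le_of_lipschitzWith_fderiv hf hf' x (t i)
  have summable_remainder : Summable remainder :=
    .of_norm_bounded (hw₂.mul_left _) norm_remainder_le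
  have hasSum_smul : HasSum (fun i ↦ w i • f (t i)) (∑' i, remainder i + f x) := by
    have hsum := (summable_remainder.hasSum.add (hw₀.smul_const (f x))).add
      ((fderiv ℝ f x).hasSum hw₁)
    rw [one_smul, map_zero, add_zero] at hsum
    refine hsum.congr_fun fun i ↦ ?_
    simp only [remainder, map_smul]
    module
  refine ⟨hasSum_smul.summable, ?_⟩
  rw [hasSum_smul.tsum_eq, add_sub_cancel_right]
  exact tsum_of_norm_bounded (hw₂.hasSum.mul_left _) norm_remainder_le

end Taylor

theorem lipschitzWith_fderiv_iff_lipschitzWith_deriv {𝕜 E : Type*} [NontriviallyNormedField 𝕜]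
    [NormedAddCommGroup E] [NormedSpace 𝕜 E] {f : 𝕜 → E} {M : ℝ≥0} :
    LipschitzWith M (fderiv 𝕜 f) ↔ LipschitzWith M (deriv f) := by
  simp only [lipschitzWith_iff_dist_le_mul, ← toSpanSingleton_deriv,
    ← ContinuousLinearMap.toSpanSingletonLIE_apply, LinearIsometryEquiv.dist_map]

theorem summable_mul_of_summable_abs_mul_sq {ι : Type*} {w d : ι → ℝ} (hw : Summable w)
    (hwd : Summable fun i ↦ |w i| * d i ^ 2) : Summable fun i ↦ d i * w i := by
  refine .of_norm_bounded (hw.abs.add hwd) fun i ↦ ?_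
  have abs_le_one_add_sq : |d i| ≤ 1 + d i ^ 2 := by nlinarith [sq_abs (d i), sq_nonneg (|d i| - 1)]
  calc
    ‖d i * w i‖ = |w i| * |d i| := by rw [norm_mul, mul_comm]; rfl
    _ ≤ |w i| * (1 + d i ^ 2) := by gcongr
    _ = |w i| + |w i| * d i ^ 2 := by ring

theorem card_Icc_ceil_floor_le {𝕜 : Type*} [Ring 𝕜] [LinearOrder 𝕜] [IsStrictOrderedRing 𝕜]
    [FloorRing 𝕜] {a b : 𝕜} (hab : a ≤ b) : ((Finset.Icc ⌈a⌉ ⌊b⌋).card : 𝕜) ≤ b - a + 1 := by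
  have ceil_le_floor_add_one : ⌈a⌉ ≤ ⌊b⌋ + 1 :=
    (Int.ceil_mono hab).trans (Int.ceil_le_floor_add_one b)
  have card_eq : ((Finset.Icc ⌈a⌉ ⌊b⌋).card : 𝕜) = ⌊b⌋ + 1 - ⌈a⌉ := by
    exact_mod_cast congrArg (Int.cast : ℤ → 𝕜) (Int.card_Icc_of_le _ _ ceil_le_floor_add_one)
  calc
    ((Finset.Icc ⌈a⌉ ⌊b⌋).card : 𝕜) = ⌊b⌋ + 1 - ⌈a⌉ := card_eq
    _ ≤ b + 1 - a := by gcongr; exacts [Int.floor_le b, Int.le_ceil a]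
    _ = b - a + 1 := add_sub_right_comm b 1 a

section IntegerTranslates

variable {R : ℝ}

theorem apply_sub_intCast_eq_zero_of_notMem_Icc {α : Type*} [Zero α] {g : ℝ → α}
    (hg : ∀ x, R ≤ |x| → g x = 0) (r : ℝ) (j : ℤ) (hj : j ∉ Finset.Icc ⌈r - R⌉ ⌊r + R⌋) :
    g (r - j) = 0 := by
  refine hg _ (le_of_not_gt fun hlt ↦ hj ?_)
  rw [Finset.mem_Icc, Int.ceil_le, Int.le_floor]
  constructor <;> linarith [abs_lt.1 hlt]

theorem tsum_apply_sub_intCast_le {g : ℝ → ℝ} {C : ℝ} (hR : 0 ≤ R)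
    (hg : ∀ x, R ≤ |x| → g x = 0) (hgC : ∀ x, g x ≤ C) (r : ℝ) :
    ∑' j : ℤ, g (r - j) ≤ (2 * R + 1) * C := by
  have hC : 0 ≤ C := hg R (le_abs_self R) ▸ hgC R
  rw [tsum_eq_sum (apply_sub_intCast_eq_zero_of_notMem_Icc hg r)]
  calc
    _ ≤ (Finset.Icc ⌈r - R⌉ ⌊r + R⌋).card • C := Finset.sum_le_card_nsmul _ _ _ fun j _ ↦ hgC _
    _ = (Finset.Icc ⌈r - R⌉ ⌊r + R⌋).card * C := nsmul_eq_mul _ _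
    _ ≤ (r + R - (r - R) + 1) * C := by gcongr; exact card_Icc_ceil_floor_le (by linarith)
    _ = (2 * R + 1) * C := by ring

variable {φ : ℝ → ℝ}

theorem abs_mul_sq_eq_zero_of_le_abs (hφ : ∀ x, R ≤ |x| → φ x = 0) (x : ℝ) (hx : R ≤ |x|) :
    |φ x| * x ^ 2 = 0 := by
  rw [hφ x hx, abs_zero, zero_mul]

theorem abs_mul_sq_le_mul_sq {B : ℝ} (hφ : ∀ x, R ≤ |x| → φ x = 0) (hB : ∀ x, |φ x| ≤ B) (x : ℝ) :
    |φ x| * x ^ 2 ≤ B * R ^ 2 := by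
  have B_nonneg : 0 ≤ B := (abs_nonneg _).trans (hB x)
  rcases le_or_gt R |x| with hx | hx
  · rw [abs_mul_sq_eq_zero_of_le_abs hφ x hx]
    positivity
  · exact mul_le_mul (hB x) (sq_le_sq.2 (hx.le.trans (le_abs_self R))) (sq_nonneg x) B_nonneg

theorem summable_abs_mul_sq_sub_intCast (hφ : ∀ x, R ≤ |x| → φ x = 0) (r : ℝ) :
    Summable fun j : ℤ ↦ |φ (r - j)| * (r - j) ^ 2 :=
  summable_of_ne_finset_zero
    (apply_sub_intCast_eq_zero_of_notMem_Icc (abs_mul_sq_eq_zero_of_le_abs hφ) r)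

theorem tsum_abs_mul_sq_sub_intCast_le {B : ℝ} (hR : 0 ≤ R) (hφ : ∀ x, R ≤ |x| → φ x = 0)
    (hB : ∀ x, |φ x| ≤ B) (r : ℝ) :
    ∑' j : ℤ, |φ (r - j)| * (r - j) ^ 2 ≤ (2 * R + 1) * (B * R ^ 2) :=
  tsum_apply_sub_intCast_le hR (abs_mul_sq_eq_zero_of_le_abs hφ) (abs_mul_sq_le_mul_sq hφ hB) r

end IntegerTranslates

theorem second_order_interpolation_accuracy_general {E : Type*} [NormedAddCommGroup E]
    [NormedSpace ℝ E] [CompleteSpace E] {φ : ℝ → ℝ} {K : ℝ}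
    (h₀ : ∀ r : ℝ, ∑' j : ℤ, φ (r - j) = 1)
    (h₁ : ∀ r : ℝ, ∑' j : ℤ, (r - j) * φ (r - j) = 0)
    (h₂ : ∀ r : ℝ, Summable fun j : ℤ ↦ |φ (r - j)| * (r - j) ^ 2)
    (hK : ∀ r : ℝ, ∑' j : ℤ, |φ (r - j)| * (r - j) ^ 2 ≤ K)
    {f : ℝ → E} {M : ℝ≥0} (hf : Differentiable ℝ f) (hf' : LipschitzWith M (deriv f))
    {h : ℝ} (hh : h ≠ 0) (x : ℝ) :
    (Summable fun j : ℤ ↦ φ (x / h - j) • f (j * h)) ∧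
      ‖∑' j : ℤ, φ (x / h - j) • f (j * h) - f x‖ ≤ K / 2 * M * h ^ 2 := by
  obtain ⟨r, rfl⟩ : ∃ r, x = r * h := ⟨x / h, (div_mul_cancel₀ x hh).symm⟩
  rw [mul_div_cancel_right₀ r hh]
  have summable_weights : Summable fun j : ℤ ↦ φ (r - j) :=
    by_contra fun hns ↦ zero_ne_one ((tsum_eq_zero_of_not_summable hns).symm.trans (h₀ r))
  have hasSum_weights : HasSum (fun j : ℤ ↦ φ (r - j)) 1 := h₀ r ▸ summable_weights.hasSum
  have hasSum_first : HasSum (fun j : ℤ ↦ φ (r - j) • (j * h - r * h)) 0 := by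
    have hsum := (summable_mul_of_summable_abs_mul_sq summable_weights (h₂ r)).hasSum.mul_right (-h)
    rw [h₁ r, zero_mul] at hsum
    refine hsum.congr_fun fun j ↦ ?_
    rw [smul_eq_mul]
    ring
  have second_eq (j : ℤ) : |φ (r - j)| * ‖j * h - r * h‖ ^ 2 =
      |φ (r - j)| * (r - j) ^ 2 * h ^ 2 := by
    rw [Real.norm_eq_abs, sq_abs]
    ring
  obtain ⟨hsummable, herror⟩ := summable_and_norm_tsum_smul_sub_le_of_moments hasSum_weights
    hasSum_first (by simpa only [second_eq] using (h₂ r).mul_right (h ^ 2)) hf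
    (lipschitzWith_fderiv_iff_lipschitzWith_deriv.2 hf')
  refine ⟨hsummable, herror.trans ?_⟩
  simp only [second_eq, tsum_mul_right]
  calc
    _ ≤ M / 2 * (K * h ^ 2) := by gcongr; exact hK r
    _ = K / 2 * M * h ^ 2 := by ring

/-- A compactly supported, bounded kernel satisfying the zeroth and first moment
conditions interpolates smooth functions with second-order accuracy: there is a constant
`C₀` (depending only on `φ` and `rs`) such that for every `C²` function `f` with second
derivative bounded by `M`, every meshwidth `h > 0` and every point `x`,
`|∑_{j∈ℤ} φ(x/h − j)·f(j·h) − f(x)| ≤ C₀·M·h²`. -/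
theorem second_order_interpolation_accuracy
    (φ : ℝ → ℝ) (rs : ℝ) (hrs : 0 < rs) (hsupp : ∀ x : ℝ, rs ≤ |x| → φ x = 0)
    (B : ℝ) (hbdd : ∀ x : ℝ, |φ x| ≤ B)
    (h0 : ∀ r : ℝ, ∑' j : ℤ, φ (r - j) = 1)
    (h1 : ∀ r : ℝ, ∑' j : ℤ, (r - j) * φ (r - j) = 0) :
    ∃ C₀ : ℝ, ∀ (f : ℝ → ℝ), ContDiff ℝ 2 f →
      ∀ M : ℝ, (∀ y : ℝ, |deriv (deriv f) y| ≤ M) →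
      ∀ h : ℝ, 0 < h → ∀ x : ℝ,
        |(∑' j : ℤ, φ (x / h - j) * f (j * h)) - f x| ≤ C₀ * M * h ^ 2 := by
  refine ⟨(2 * rs + 1) * (B * rs ^ 2) / 2, fun f hf M hM h hh x ↦ ?_⟩
  lift M to ℝ≥0 using (abs_nonneg _).trans (hM 0)
  exact (second_order_interpolation_accuracy_general h0 h1 (summable_abs_mul_sq_sub_intCast hsupp)
    (tsum_abs_mul_sq_sub_intCast_le hrs.le hsupp hbdd) (hf.differentiable two_ne_zero)
    (lipschitzWith_of_nnnorm_deriv_le hf.differentiable_deriv_two hM) hh.ne' x).2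
end

section
/- The standard 4-point IB kernel satisfies the sum-of-squares condition with constant 3/8: for every x ∈ ℝ, ∑_{j∈ℤ} φ₄(x − j)² = 3/8. -/
noncomputable section

/-- The standard 4-point immersed-boundary kernel. -/
def phi4 (r : ℝ) : ℝ :=
  if |r| ≤ 1 then (3 - 2 * |r| + Real.sqrt (1 + 4 * |r| - 4 * r ^ 2)) / 8
  else if |r| < 2 then (5 - 2 * |r| - Real.sqrt (-7 + 12 * |r| - 4 * r ^ 2)) / 8
  else 0

/-!
Only the four translates of `t = Int.fract x` by `-2, -1, 0, 1` contribute. For `t ∈ [0, 1]` the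
values at `t` and `t + 1` are `(3 - 2 * t ± s) / 8` with the same `s = √(1 + 4 * t - 4 * t ^ 2)`,
so the cross terms of their squares cancel and the sum of the squares is the affine function
`(5 - 4 * t) / 16`. Since the kernel is even, the remaining two values are those at `1 - t` and
`(1 - t) + 1`, and the slopes cancel: `(5 - 4 * t) / 16 + (5 - 4 * (1 - t)) / 16 = 3 / 8`.
-/

theorem hasSum_comp_sub_intCast_of_support_subset_Ico {R M : Type*} [Ring R] [LinearOrder R]
    [IsStrictOrderedRing R] [FloorRing R] [AddCommMonoid M] [TopologicalSpace M] {g : R → M}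
    {a b : ℤ} (hg : Function.support g ⊆ Set.Ico (a : R) b) (x : R) :
    HasSum (fun j : ℤ => g (x - j)) (∑ k ∈ Finset.Ico a b, g (Int.fract x + k)) := by
  rw [← (Equiv.subLeft ⌊x⌋).hasSum_iff]
  have shift : (fun j : ℤ => g (x - j)) ∘ Equiv.subLeft ⌊x⌋ = fun k : ℤ => g (Int.fract x + k) := by
    ext k
    simp only [Function.comp_apply, Equiv.subLeft_apply, Int.cast_sub, Int.fract]
    congr 1
    abel
  rw [shift]
  refine hasSum_sum_of_ne_finset_zero fun k hk => ?_
  contrapose! hk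
  obtain ⟨hak, hkb⟩ := hg hk
  have floor_eq : ⌊Int.fract x + k⌋ = k := by simp
  rw [Finset.mem_Ico, ← floor_eq]
  exact ⟨Int.le_floor.2 hak, Int.floor_lt.2 hkb⟩

theorem phi4_neg (r : ℝ) : phi4 (-r) = phi4 r := by
  simp only [phi4, abs_neg, neg_sq]

theorem phi4_of_two_le_abs {r : ℝ} (hr : 2 ≤ |r|) : phi4 r = 0 := by
  rw [phi4, if_neg (by linarith), if_neg (by linarith)]

theorem support_phi4_subset_Ioo : Function.support phi4 ⊆ Set.Ioo (-2) 2 := by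
  intro r hr
  have abs_lt_two : |r| < 2 := lt_of_not_ge fun h => hr (phi4_of_two_le_abs h)
  exact abs_lt.1 abs_lt_two

theorem phi4_of_mem_Icc {t : ℝ} (ht : t ∈ Set.Icc 0 1) :
    phi4 t = (3 - 2 * t + √(1 + 4 * t - 4 * t ^ 2)) / 8 := by
  rw [phi4, abs_of_nonneg ht.1, if_pos ht.2]

theorem phi4_add_one_of_mem_Icc {t : ℝ} (ht : t ∈ Set.Icc 0 1) :
    phi4 (t + 1) = (3 - 2 * t - √(1 + 4 * t - 4 * t ^ 2)) / 8 := by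
  obtain ⟨ht₀, ht₁⟩ := ht
  rcases ht₀.eq_or_lt with rfl | ht₀
  · norm_num [phi4]
  rcases ht₁.eq_or_lt with rfl | ht₁
  · norm_num [phi4]
  rw [phi4, abs_of_pos (by linarith), if_neg (by linarith), if_pos (by linarith)]
  ring_nf

theorem phi4_sq_add_phi4_add_one_sq {t : ℝ} (ht : t ∈ Set.Icc 0 1) :
    phi4 t ^ 2 + phi4 (t + 1) ^ 2 = (5 - 4 * t) / 16 := by
  have radicand_nonneg : 0 ≤ 1 + 4 * t - 4 * t ^ 2 := by
    nlinarith [mul_nonneg ht.1 (sub_nonneg.2 ht.2)]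
  rw [phi4_of_mem_Icc ht, phi4_add_one_of_mem_Icc ht]
  linear_combination (1 / 32) * Real.sq_sqrt radicand_nonneg

theorem sum_Ico_phi4_add_sq {t : ℝ} (ht : t ∈ Set.Icc 0 1) :
    ∑ k ∈ Finset.Ico (-2 : ℤ) 2, phi4 (t + k) ^ 2 = 3 / 8 := by
  have reflect_one : phi4 (t + (-1 : ℤ)) = phi4 (1 - t) := by
    rw [← phi4_neg]
    push_cast
    ring_nf
  have reflect_two : phi4 (t + (-2 : ℤ)) = phi4 (1 - t + 1) := by
    rw [← phi4_neg]
    push_cast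
    ring_nf
  have pair := phi4_sq_add_phi4_add_one_sq ht
  have reflected_pair := phi4_sq_add_phi4_add_one_sq (Set.Icc.mem_iff_one_sub_mem.1 ht)
  rw [show Finset.Ico (-2 : ℤ) 2 = {-2, -1, 0, 1} by decide, Finset.sum_insert (by decide),
    Finset.sum_insert (by decide), Finset.sum_pair (by decide), reflect_one, reflect_two,
    Int.cast_zero, Int.cast_one, add_zero]
  linear_combination pair + reflected_pair

theorem hasSum_phi4_sub_intCast_sq (x : ℝ) : HasSum (fun j : ℤ => phi4 (x - j) ^ 2) (3 / 8) := by
  have support_sq : Function.support (fun r => phi4 r ^ 2) ⊆ Set.Ico ((-2 : ℤ) : ℝ) (2 : ℤ) := by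
    rw [Function.support_pow _ two_ne_zero]
    exact_mod_cast support_phi4_subset_Ioo.trans Set.Ioo_subset_Ico_self
  rw [← sum_Ico_phi4_add_sq ⟨Int.fract_nonneg x, (Int.fract_lt_one x).le⟩]
  exact hasSum_comp_sub_intCast_of_support_subset_Ico support_sq x

/-- The standard 4-point kernel satisfies the sum-of-squares condition with
constant `3/8`. -/
theorem phi4_sum_of_squares (x : ℝ) : ∑' j : ℤ, (phi4 (x - j)) ^ 2 = 3 / 8 :=
  (hasSum_phi4_sub_intCast_sq x).tsum_eq

end
end

section
/- The standard 4-point IB kernel satisfies the even–odd condition: for every x ∈ ℝ, ∑_{j∈ℤ, j even} φ₄(x − j) = 1/2 and ∑_{j∈ℤ, j odd} φ₄(x − j) = 1/2. -/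
noncomputable section

/-!
A coset of `2ℤ` contains a unique `r` with `0 ≤ r < 2`, and only `r` and `r - 2` among its elements
can lie in `(-2, 2)`, outside of which `φ₄` vanishes. The kernel is even, and for `0 ≤ r ≤ 1` the
outer branch at `2 - r` has the same square root as the inner branch at `r`, with the opposite sign,
so that `φ₄ r + φ₄ (2 - r) = 1 / 2`; this identity is symmetric under `r ↦ 2 - r`.
-/

section General

variable {G M : Type*} [AddCommGroup G] [LinearOrder G] [IsOrderedAddMonoid G]
  [AddCommMonoid M] [TopologicalSpace M]

theorem le_abs_sub_zsmul_of_sub_zsmul_mem_Ico {T x : G} {k m : ℤ}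
    (hk : x - k • T ∈ Set.Ico 0 T) (hmk : m ≠ k) (hmk' : m ≠ k + 1) : T ≤ |x - m • T| := by
  have hT : 0 ≤ T := hk.1.trans hk.2.le
  rcases (by lia : m + 1 ≤ k ∨ k + 2 ≤ m) with hm | hm
  · refine le_abs.mpr (Or.inl (le_sub_iff_add_le'.mpr ?_))
    calc m • T + T = (m + 1) • T := (add_one_zsmul T m).symm
      _ ≤ k • T := zsmul_le_zsmul_left hT hm
      _ ≤ x := sub_nonneg.mp hk.1
  · refine le_abs.mpr (Or.inr ?_)
    rw [neg_sub, le_sub_iff_add_le']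
    calc x + T ≤ T + k • T + T := by gcongr; exact (sub_lt_iff_lt_add.mp hk.2).le
      _ = (k + 2) • T := by rw [add_zsmul, two_zsmul]; abel
      _ ≤ m • T := zsmul_le_zsmul_left hT hm

theorem hasSum_sub_zsmul_of_add_sub_eq [Archimedean G] {f : G → M} {T : G} {c : M}
    (hT : 0 < T) (hf_zero : ∀ r, T ≤ |r| → f r = 0)
    (hf_add : ∀ r ∈ Set.Ico 0 T, f r + f (r - T) = c) (x : G) :
    HasSum (fun m : ℤ => f (x - m • T)) c := by
  obtain ⟨k, hk, -⟩ := existsUnique_sub_zsmul_mem_Ico hT x 0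
  rw [zero_add] at hk
  have sum_pair : ∑ m ∈ {k, k + 1}, f (x - m • T) = c := by
    rw [Finset.sum_pair (by lia), add_one_zsmul, ← sub_sub, hf_add _ hk]
  rw [← sum_pair]
  refine hasSum_sum_of_ne_finset_zero fun m hm => hf_zero _ ?_
  simp only [Finset.mem_insert, Finset.mem_singleton, not_or] at hm
  exact le_abs_sub_zsmul_of_sub_zsmul_mem_Ico hk hm.1 hm.2

theorem hasSum_ite_of_forall_iff_mem_range {ι κ : Type*} {P : κ → Prop} [DecidablePred P]
    {g : ι → κ} (hg : g.Injective) (hP : ∀ j, P j ↔ j ∈ Set.range g) {f : κ → M} {c : M}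
    (hf : HasSum (fun i => f (g i)) c) : HasSum (fun j => if P j then f j else 0) c := by
  refine (hg.hasSum_iff fun j hj => if_neg (mt (hP j).mp hj)).mp ?_
  simpa only [Function.comp_def, hP, Set.mem_range_self, if_true] using hf

end General

theorem phi4_of_mem_Icc_zero_one {r : ℝ} (hr : r ∈ Set.Icc 0 1) :
    phi4 r = (3 - 2 * r + √(1 + 4 * r - 4 * r ^ 2)) / 8 := by
  rw [phi4, abs_of_nonneg hr.1, if_pos hr.2]

theorem phi4_of_mem_Icc_one_two {r : ℝ} (hr : r ∈ Set.Icc 1 2) :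
    phi4 r = (5 - 2 * r - √(-7 + 12 * r - 4 * r ^ 2)) / 8 := by
  rcases hr.1.eq_or_lt with rfl | one_lt
  · norm_num [phi4]
  rcases hr.2.eq_or_lt with rfl | lt_two
  · norm_num [phi4]
  rw [phi4, abs_of_pos (by linarith), if_neg one_lt.not_ge, if_pos lt_two]

theorem phi4_add_phi4_two_sub {r : ℝ} (hr : r ∈ Set.Icc 0 2) :
    phi4 r + phi4 (2 - r) = 1 / 2 := by
  wlog r_le_one : r ≤ 1 generalizing r
  · have reflected := this (r := 2 - r) ⟨by linarith [hr.2], by linarith [hr.1]⟩ (by linarith)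
    rwa [sub_sub_cancel, add_comm] at reflected
  have radicand_eq : -7 + 12 * (2 - r) - 4 * (2 - r) ^ 2 = 1 + 4 * r - 4 * r ^ 2 := by ring
  rw [phi4_of_mem_Icc_zero_one ⟨hr.1, r_le_one⟩,
    phi4_of_mem_Icc_one_two ⟨by linarith, by linarith [hr.1]⟩, radicand_eq]
  ring

theorem hasSum_phi4_sub_two_mul (x : ℝ) : HasSum (fun m : ℤ => phi4 (x - 2 * m)) (1 / 2) := by
  have phi4_add_phi4_sub_two (r : ℝ) (hr : r ∈ Set.Ico 0 2) : phi4 r + phi4 (r - 2) = 1 / 2 := by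
    rw [← phi4_neg (r - 2), neg_sub, phi4_add_phi4_two_sub (Set.Ico_subset_Icc_self hr)]
  simpa only [zsmul_eq_mul, mul_comm] using
    hasSum_sub_zsmul_of_add_sub_eq two_pos (fun _ => phi4_of_two_le_abs) phi4_add_phi4_sub_two x

theorem hasSum_even_phi4 (x : ℝ) :
    HasSum (fun j : ℤ => if Even j then phi4 (x - j) else 0) (1 / 2) := by
  refine hasSum_ite_of_forall_iff_mem_range (g := fun m : ℤ => 2 * m)
    (mul_right_injective₀ two_ne_zero) (fun j => ?_) ?_
  · simp only [even_iff_exists_two_mul, Set.mem_range, eq_comm]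
  · simpa only [Int.cast_mul, Int.cast_ofNat] using hasSum_phi4_sub_two_mul x

theorem hasSum_odd_phi4 (x : ℝ) :
    HasSum (fun j : ℤ => if Odd j then phi4 (x - j) else 0) (1 / 2) := by
  refine hasSum_ite_of_forall_iff_mem_range (g := fun m : ℤ => 2 * m + 1)
    ((add_left_injective 1).comp (mul_right_injective₀ two_ne_zero)) (fun j => ?_) ?_
  · simp only [Odd, Set.mem_range, eq_comm]
  · simpa only [Int.cast_add, Int.cast_mul, Int.cast_ofNat, Int.cast_one, sub_add_eq_sub_sub_swap]
      using hasSum_phi4_sub_two_mul (x - 1)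

/-- The standard 4-point kernel satisfies the even–odd condition: the sums over even
and over odd `j` of `φ₄(x − j)` are each `1/2`. -/
theorem phi4_even_odd (x : ℝ) :
    (∑' j : ℤ, if Even j then phi4 (x - j) else 0) = 1 / 2 ∧
    (∑' j : ℤ, if Odd j then phi4 (x - j) else 0) = 1 / 2 :=
  ⟨(hasSum_even_phi4 x).tsum_eq, (hasSum_odd_phi4 x).tsum_eq⟩

end
end

section
/- The standard 3-point IB kernel satisfies the zeroth moment, first moment, and sum-of-squares conditions: for every x ∈ ℝ, ∑_{j∈ℤ} φ₃(x − j) = 1, ∑_{j∈ℤ} (x − j)·φ₃(x − j) = 0, and ∑_{j∈ℤ} φ₃(x − j)² = 1/2. -/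
noncomputable section

/-- The standard 3-point immersed-boundary kernel. -/
def phi3 (r : ℝ) : ℝ :=
  if |r| ≤ 1 / 2 then (1 + Real.sqrt (1 - 3 * r ^ 2)) / 3
  else if |r| < 3 / 2 then (5 - 3 * |r| - Real.sqrt (1 - 3 * (1 - |r|) ^ 2)) / 6
  else 0

/-!
Only the three translates `x - j` with `j` within `1` of the integer nearest to `x` lie in the
support of `φ₃`. Writing `r` for the signed distance from `x` to that integer and
`s = √(1 - 3r²)`, the kernel takes the values `(2 - 3r - s) / 6`, `(1 + s) / 3` and
`(2 + 3r - s) / 6` at `r + 1`, `r` and `r - 1`. The two moment conditions are linear identities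
in `s`, and the sum of squares is evaluated using `s² = 1 - 3r²`.
-/

section IntegerTranslates

variable {α M : Type*} [Field α] [LinearOrder α] [IsStrictOrderedRing α] [FloorRing α]
  [AddCommMonoid M] [TopologicalSpace M] {f : α → M}

theorem hasSum_sub_intCast_of_add_half_le_abs (k : ℕ)
    (hf : ∀ r : α, k + 1 / 2 ≤ |r| → f r = 0) (x : α) :
    HasSum (fun j : ℤ ↦ f (x - j)) (∑ i ∈ Finset.Icc (-k : ℤ) k, f (x - round x - i)) := by
  have hasSum_shifted : HasSum (fun i : ℤ ↦ f (x - round x - i))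
      (∑ i ∈ Finset.Icc (-k : ℤ) k, f (x - round x - i)) := by
    refine hasSum_sum_of_ne_finset_zero fun i hi ↦ hf _ ?_
    have add_one_le_abs : (k : ℤ) + 1 ≤ |i| := by
      rwa [Finset.mem_Icc, ← abs_le, not_le] at hi
    calc (k : α) + 1 / 2 = (k + 1) - 1 / 2 := by ring
      _ ≤ |(i : α)| - |x - round x| := sub_le_sub (mod_cast add_one_le_abs) (abs_sub_round x)
      _ ≤ |i - (x - round x)| := abs_sub_abs_le_abs_sub _ _
      _ = |x - round x - i| := abs_sub_comm _ _
  refine (Equiv.addLeft (round x)).hasSum_iff.mp ?_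
  simpa [Function.comp_def, sub_sub] using hasSum_shifted

theorem hasSum_sub_intCast_of_three_halves_le_abs
    (hf : ∀ r, 3 / 2 ≤ |r| → f r = 0) (x : α) :
    HasSum (fun j : ℤ ↦ f (x - j))
      (f (x - round x + 1) + f (x - round x) + f (x - round x - 1)) := by
  have Icc_eq : Finset.Icc (-1 : ℤ) 1 = {-1, 0, 1} := by decide
  have three_halves_eq : ((1 : ℕ) : α) + 1 / 2 = 3 / 2 := by norm_num
  simpa [Icc_eq, add_assoc] using
    hasSum_sub_intCast_of_add_half_le_abs 1 (by rwa [three_halves_eq]) x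

end IntegerTranslates

section KernelValues

theorem phi3_neg (r : ℝ) : phi3 (-r) = phi3 r := by
  simp only [phi3, abs_neg, neg_sq]

variable {r : ℝ}

theorem phi3_eq_zero_of_three_halves_le_abs (hr : 3 / 2 ≤ |r|) : phi3 r = 0 := by
  rw [phi3, if_neg (by linarith), if_neg (by linarith)]

theorem phi3_of_abs_le_half (hr : |r| ≤ 1 / 2) : phi3 r = (1 + √(1 - 3 * r ^ 2)) / 3 :=
  if_pos hr

theorem sqrt_one_sub_three_mul_sq_of_abs_eq_half (hr : |r| = 1 / 2) :
    √(1 - 3 * r ^ 2) = 1 / 2 := by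
  rw [← sq_abs, hr, Real.sqrt_eq_iff_eq_sq (by norm_num) (by norm_num)]
  norm_num

-- `phi3` is continuous at `1 / 2` and `3 / 2`, so the formula of its outer branch extends to the
-- endpoints `r = -1 / 2` and `r = 1 / 2`.
theorem phi3_add_one_of_abs_le_half (hr : |r| ≤ 1 / 2) :
    phi3 (r + 1) = (2 - 3 * r - √(1 - 3 * r ^ 2)) / 6 := by
  obtain ⟨neg_half_le, le_half⟩ := abs_le.mp hr
  have abs_add_one : |r + 1| = r + 1 := abs_of_pos (by linarith)
  rcases neg_half_le.eq_or_lt with rfl | neg_half_lt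
  · rw [phi3_of_abs_le_half (by norm_num), sqrt_one_sub_three_mul_sq_of_abs_eq_half (by norm_num),
      sqrt_one_sub_three_mul_sq_of_abs_eq_half (by norm_num)]
    norm_num
  rcases le_half.eq_or_lt with rfl | lt_half
  · rw [phi3_eq_zero_of_three_halves_le_abs (by norm_num),
      sqrt_one_sub_three_mul_sq_of_abs_eq_half (by norm_num)]
    norm_num
  · rw [phi3, abs_add_one, if_neg (by linarith), if_pos (by linarith)]
    ring_nf

theorem phi3_sub_one_of_abs_le_half (hr : |r| ≤ 1 / 2) :
    phi3 (r - 1) = (2 + 3 * r - √(1 - 3 * r ^ 2)) / 6 := by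
  rw [← phi3_neg, neg_sub', sub_neg_eq_add, phi3_add_one_of_abs_le_half (by rwa [abs_neg]),
    neg_sq, mul_neg, sub_neg_eq_add]

end KernelValues

theorem hasSum_phi3_sub_intCast (x : ℝ) : HasSum (fun j : ℤ ↦ phi3 (x - j)) 1 := by
  convert hasSum_sub_intCast_of_three_halves_le_abs
    (fun _ ↦ phi3_eq_zero_of_three_halves_le_abs) x using 1
  have hr := abs_sub_round x
  rw [phi3_add_one_of_abs_le_half hr, phi3_of_abs_le_half hr, phi3_sub_one_of_abs_le_half hr]
  ring

theorem hasSum_mul_phi3_sub_intCast (x : ℝ) :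
    HasSum (fun j : ℤ ↦ (x - j) * phi3 (x - j)) 0 := by
  convert hasSum_sub_intCast_of_three_halves_le_abs (f := fun r ↦ r * phi3 r)
    (fun r hr ↦ by rw [phi3_eq_zero_of_three_halves_le_abs hr, mul_zero]) x using 1
  have hr := abs_sub_round x
  rw [phi3_add_one_of_abs_le_half hr, phi3_of_abs_le_half hr, phi3_sub_one_of_abs_le_half hr]
  ring

theorem hasSum_phi3_sub_intCast_sq (x : ℝ) :
    HasSum (fun j : ℤ ↦ phi3 (x - j) ^ 2) (1 / 2) := by
  convert hasSum_sub_intCast_of_three_halves_le_abs (f := fun r ↦ phi3 r ^ 2)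
    (fun r hr ↦ by rw [phi3_eq_zero_of_three_halves_le_abs hr, zero_pow two_ne_zero]) x using 1
  have hr := abs_sub_round x
  have sq_sqrt : √(1 - 3 * (x - round x) ^ 2) ^ 2 = 1 - 3 * (x - round x) ^ 2 :=
    Real.sq_sqrt (by linarith [sq_le_sq' (abs_le.mp hr).1 (abs_le.mp hr).2])
  rw [phi3_add_one_of_abs_le_half hr, phi3_of_abs_le_half hr, phi3_sub_one_of_abs_le_half hr]
  linear_combination -(1 / 6) * sq_sqrt

/-- The standard 3-point kernel satisfies the zeroth moment, first moment, and
sum-of-squares (with constant `1/2`) conditions. -/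
theorem phi3_moments_and_sum_of_squares (x : ℝ) :
    (∑' j : ℤ, phi3 (x - j)) = 1 ∧
    (∑' j : ℤ, (x - j) * phi3 (x - j)) = 0 ∧
    (∑' j : ℤ, (phi3 (x - j)) ^ 2) = 1 / 2 :=
  ⟨(hasSum_phi3_sub_intCast x).tsum_eq, (hasSum_mul_phi3_sub_intCast x).tsum_eq,
    (hasSum_phi3_sub_intCast_sq x).tsum_eq⟩

end
end
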